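/- For every natural number p ≥ 5, setting r = p(p−1)/2, the number of non-chordal simple graphs on Fin p having exactly 5 edges equals 12 · C(p,5) + 3 · C(p,4) · (r − 6). (Paper's Lemma 2, part 3: F_{p,5} = binom(p,5)·12 + binom(p,4)·3·(r−6).) -/

import Mathlib

/-- A simple graph is chordal ("decomposable") if for every `n ≥ 4` there is no
graph embedding (induced subgraph copy) of the `n`-cycle into it. -/
def IsChordal {V : Type*} (G : SimpleGraph V) : Prop :=
  ∀ n : ℕ, 4 ≤ n → IsEmpty (SimpleGraph.cycleGraph n ↪g G)

/-- `Fcount p k` is the number of non-chordal simple graphs on `Fin p` with exactly `k` edges. -/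
noncomputable def Fcount (p k : ℕ) : ℕ :=
  Nat.card {G : SimpleGraph (Fin p) // G.edgeSet.ncard = k ∧ ¬ IsChordal G}

open SimpleGraph

lemma cyc_edges (n : ℕ) (hn : 3 ≤ n) : (cycleGraph n).edgeSet.ncard = n := by
  obtain ⟨m, rfl⟩ : ∃ m, n = m + 3 := ⟨n - 3, by omega⟩
  have h := (cycleGraph (m+3)).sum_degrees_eq_twice_card_edges
  simp only [cycleGraph_degree_three_le, Finset.sum_const, Finset.card_univ, Fintype.card_fin, smul_eq_mul] at h
  rw [← coe_edgeFinset, Set.ncard_coe_finset]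
  omega

lemma cyc_nbr (n : ℕ) (hn : 3 ≤ n) (i : Fin n) : ∃ a b, a ≠ b ∧ (cycleGraph n).Adj i a ∧ (cycleGraph n).Adj i b := by
  obtain ⟨m, rfl⟩ : ∃ m, n = m + 3 := ⟨n - 3, by omega⟩
  have h : (cycleGraph (m+3)).degree i = 2 := cycleGraph_degree_three_le
  rw [← card_neighborFinset_eq_degree, Finset.card_eq_two] at h
  obtain ⟨a, b, hab, h⟩ := h
  refine ⟨a, b, hab, ?_, ?_⟩ <;> rw [← mem_neighborFinset, h] <;> simp

lemma autEquiv {n : ℕ} : Nat.card (cycleGraph n ≃g cycleGraph n) =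
    Fintype.card {σ : Equiv.Perm (Fin n) // ∀ a b, (cycleGraph n).Adj (σ a) (σ b) ↔ (cycleGraph n).Adj a b} := by
  rw [← Nat.card_eq_fintype_card]
  refine Nat.card_congr ⟨fun e => ⟨e.toEquiv, fun a b => e.map_rel_iff⟩, fun s => ⟨s.1, fun {a b} => s.2 a b⟩, fun _ => rfl, fun _ => rfl⟩

lemma aut4 : Nat.card (cycleGraph 4 ≃g cycleGraph 4) = 8 := by
  rw [autEquiv]; decide +kernel
lemma aut5 : Nat.card (cycleGraph 5 ≃g cycleGraph 5) = 10 := by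
  rw [autEquiv]; decide +kernel

lemma img_edges {n p : ℕ} {G : SimpleGraph (Fin p)} (f : cycleGraph n ↪g G) (hn : 3 ≤ n) :
    ((Sym2.map f) '' (cycleGraph n).edgeSet).ncard = n ∧ (Sym2.map f) '' (cycleGraph n).edgeSet ⊆ G.edgeSet := by
  constructor
  · rw [Set.ncard_image_of_injective _ (Sym2.map.injective f.injective), cyc_edges n hn]
  · rintro _ ⟨e, he, rfl⟩
    induction e with | _ a b => 
    simpa using he

lemma range_sub {n m p : ℕ} {G : SimpleGraph (Fin p)} (hG : G.edgeSet.ncard = 5) (hn : 4 ≤ n) (hm : 4 ≤ m)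
    (f : cycleGraph n ↪g G) (g : cycleGraph m ↪g G) : Set.range g ⊆ Set.range f := by
  rintro _ ⟨i, rfl⟩
  by_contra hi
  obtain ⟨a, b, hab, ha, hb⟩ := cyc_nbr m (by omega) i
  obtain ⟨h1, h2⟩ := img_edges f (by omega)
  have h3 : (Sym2.map f '' (cycleGraph n).edgeSet ∪ {s(g i, g a), s(g i, g b)}) ⊆ G.edgeSet := by
    apply Set.union_subset h2
    rintro _ (rfl | rfl) <;> simpa
  have h4 := Set.ncard_le_ncard h3 (Set.toFinite _)
  rw [Set.ncard_union_eq, h1, Set.ncard_pair] at h4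
  · omega
  · intro h
    rw [Sym2.congr_right] at h
    exact hab (g.injective h)
  · rw [Set.disjoint_left]
    rintro _ ⟨e, he, rfl⟩ h
    apply hi
    have : g i ∈ Sym2.map f e := by
      rcases h with h | h <;> rw [h] <;> simp
    rw [Sym2.mem_map] at this
    obtain ⟨x, _, hx⟩ := this
    exact ⟨x, hx⟩

lemma emb_card {n p : ℕ} {G : SimpleGraph (Fin p)} (hG : G.edgeSet.ncard = 5) (hn : 4 ≤ n) 
    (f : cycleGraph n ↪g G) : Nat.card (cycleGraph n ↪g G) = Nat.card (cycleGraph n ≃g cycleGraph n) := by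
  symm
  refine Nat.card_eq_of_bijective (fun s => f.comp s.toEmbedding) ⟨?_, ?_⟩
  · intro s t h
    ext i : 1
    exact f.injective (DFunLike.congr_fun h i)
  · intro g
    have h : ∀ i, ∃ j, f j = g i := fun i => range_sub hG hn hn f g ⟨i, rfl⟩
    choose s hs using h
    have hinj : Function.Injective s := fun a b hab => g.injective (by rw [← hs, ← hs, hab])
    refine ⟨⟨Equiv.ofBijective s (Finite.injective_iff_bijective.1 hinj), ?_⟩, ?_⟩
    · intro a b
      change (cycleGraph n).Adj (s a) (s b) ↔ _
      rw [← f.map_adj_iff, hs, hs, g.map_adj_iff]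
    · ext i : 1
      exact hs i

lemma ext_card {n p k : ℕ} (f : Fin n ↪ Fin p) (H : SimpleGraph (Fin n)) (hk : H.edgeSet.ncard ≤ k) :
    Nat.card {G : SimpleGraph (Fin p) // G.edgeSet.ncard = k ∧ G.comap f = H} =
      (p.choose 2 - n.choose 2).choose (k - H.edgeSet.ncard) := by
  classical
  have hcm : ∀ K : SimpleGraph (Fin n), (K.map f).edgeSet.ncard = K.edgeSet.ncard := by
    intro K
    rw [show (K.map f).edgeSet = Sym2.map f '' K.edgeSet from edgeSet_map f K, 
      Set.ncard_image_of_injective _ (Sym2.map.injective f.injective)]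
  have htop : ∀ q : ℕ, (⊤ : SimpleGraph (Fin q)).edgeSet.ncard = q.choose 2 := by
    intro q
    rw [← coe_edgeFinset, Set.ncard_coe_finset, card_edgeFinset_top_eq_card_choose_two, Fintype.card_fin]
  set I := ((⊤ : SimpleGraph (Fin n)).map f).edgeFinset with hI
  have hIs : I ⊆ (⊤ : SimpleGraph (Fin p)).edgeFinset := edgeFinset_mono le_top
  have hIc : I.card = n.choose 2 := by
    rw [← htop, ← hcm, ← Set.ncard_coe_finset, hI, coe_edgeFinset]
  have hTc : (⊤ : SimpleGraph (Fin p)).edgeFinset.card = p.choose 2 := by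
    rw [← htop, ← Set.ncard_coe_finset, coe_edgeFinset]
  have hsub : (p.choose 2 - n.choose 2).choose (k - H.edgeSet.ncard) = 
      (Finset.powersetCard (k - H.edgeSet.ncard) ((⊤ : SimpleGraph (Fin p)).edgeFinset \ I)).card := by
    rw [Finset.card_powersetCard, Finset.card_sdiff_of_subset hIs, hIc, hTc]
  have hHI : (H.map f).edgeFinset ⊆ I := edgeFinset_mono (SimpleGraph.map_monotone f le_top)
  have hHc : (H.map f).edgeFinset.card = H.edgeSet.ncard := by
    rw [← hcm, ← Set.ncard_coe_finset, coe_edgeFinset]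
  have hGd : ∀ G : SimpleGraph (Fin p), G.comap f = H → G.edgeFinset ∩ I = (H.map f).edgeFinset := by
    rintro G rfl
    ext e
    induction e with | _ a b =>
    simp only [hI, Finset.mem_inter, mem_edgeFinset, mem_edgeSet, map_adj, comap_adj, top_adj]
    constructor
    · rintro ⟨h, u, v, huv, rfl, rfl⟩
      exact ⟨u, v, h, rfl, rfl⟩
    · rintro ⟨u, v, h, rfl, rfl⟩
      exact ⟨h, u, v, fun h' => h.ne (by rw [h']), rfl, rfl⟩
  have hadd : ∀ T ∈ Finset.powersetCard (k - H.edgeSet.ncard) ((⊤ : SimpleGraph (Fin p)).edgeFinset \ I),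
      (fromEdgeSet (T : Set (Sym2 (Fin p))) ⊔ H.map f).edgeFinset = T ∪ (H.map f).edgeFinset := by
    intro T hT
    rw [Finset.mem_powersetCard] at hT
    ext e
    have h0 : e ∈ T → ¬ e.IsDiag := by
      intro he
      have := (Finset.mem_sdiff.1 (hT.1 he)).1
      rw [mem_edgeFinset] at this
      exact not_isDiag_of_mem_edgeSet _ this
    simp only [mem_edgeFinset, edgeSet_sup, edgeSet_fromEdgeSet, Finset.mem_union, Set.mem_union, Set.mem_sdiff, Finset.mem_coe, Set.mem_ofPred_eq, Sym2.mem_diagSet]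
    tauto
  have hdis : ∀ T ∈ Finset.powersetCard (k - H.edgeSet.ncard) ((⊤ : SimpleGraph (Fin p)).edgeFinset \ I),
      Disjoint T I := by
    intro T hT
    rw [Finset.mem_powersetCard] at hT
    exact Finset.disjoint_of_subset_left hT.1 Finset.sdiff_disjoint
  rw [hsub, Nat.card_eq_fintype_card, Fintype.card_subtype]
  refine Finset.card_nbij' (fun G => G.edgeFinset \ I) (fun T => fromEdgeSet (T : Set (Sym2 (Fin p))) ⊔ H.map f) ?_ ?_ ?_ ?_
  · intro G hG
    simp only [Finset.coe_filter, Finset.mem_univ, true_and, Set.mem_ofPred_eq] at hG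
    have h1 := hGd G hG.2
    have h2 := Finset.card_sdiff_add_card_inter G.edgeFinset I
    rw [h1, hHc, ← Set.ncard_coe_finset G.edgeFinset, coe_edgeFinset, hG.1] at h2
    simp only [Finset.mem_coe, Finset.mem_powersetCard]
    exact ⟨Finset.sdiff_subset_sdiff (edgeFinset_mono le_top) le_rfl, by omega⟩
  · intro T hT
    simp only [Finset.coe_filter, Finset.mem_univ, true_and, Set.mem_ofPred_eq]
    have h1 := hadd T hT
    have h2 := hdis T hT
    have h3 := (Finset.mem_powersetCard.1 hT).2
    constructor
    · rw [← coe_edgeFinset, Set.ncard_coe_finset, h1, Finset.card_union_of_disjoint (Finset.disjoint_of_subset_right hHI h2), hHc, h3]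
      omega
    · ext a b
      rw [comap_adj, ← mem_edgeSet, ← mem_edgeFinset, h1, Finset.mem_union, mem_edgeFinset, mem_edgeSet, map_adj]
      constructor
      · rintro (h | ⟨u, v, h, hu, hv⟩)
        · exfalso
          have hn : s(f a, f b) ∉ I := Finset.disjoint_left.1 h2 h
          have h4 := (Finset.mem_sdiff.1 ((Finset.mem_powersetCard.1 hT).1 h)).1
          rw [mem_edgeFinset, mem_edgeSet, top_adj] at h4
          apply hn
          rw [hI, mem_edgeFinset, mem_edgeSet, map_adj]
          exact ⟨a, b, fun h => h4 (by rw [h]), rfl, rfl⟩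
        · rwa [← f.injective hu, ← f.injective hv]
      · intro h
        exact Or.inr ⟨a, b, h, rfl, rfl⟩
  · intro G hG
    simp only [Finset.coe_filter, Finset.mem_univ, true_and, Set.mem_ofPred_eq] at hG
    have h1 := hGd G hG.2
    apply edgeSet_injective
    have h2 := Finset.sdiff_union_inter G.edgeFinset I
    rw [h1] at h2
    ext e
    have h0 : e ∈ G.edgeSet → ¬ e.IsDiag := not_isDiag_of_mem_edgeSet _
    have h3 := Finset.ext_iff.1 h2 e
    simp only [Finset.mem_union, Finset.mem_sdiff, mem_edgeFinset] at h3
    simp only [edgeSet_sup, edgeSet_fromEdgeSet, Set.mem_union, Set.mem_sdiff, Finset.mem_coe, Finset.mem_sdiff, mem_edgeFinset, Set.mem_ofPred_eq, Sym2.mem_diagSet]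
    tauto
  · intro T hT
    have h1 := hadd T hT
    have h2 := hdis T hT
    have h5 : (fromEdgeSet (T : Set (Sym2 (Fin p))) ⊔ H.map f).edgeFinset \ I = T := by
      rw [h1, Finset.union_sdiff_distrib, Finset.sdiff_eq_self_of_disjoint h2, Finset.sdiff_eq_empty_iff_subset.2 hHI, Finset.union_empty]
    convert h5

/-- double counting -/
lemma count_n {n p : ℕ} (hn : 4 ≤ n) (hn5 : n ≤ 5) :
    Nat.card {G : SimpleGraph (Fin p) // G.edgeSet.ncard = 5 ∧ Nonempty (cycleGraph n ↪g G)} *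
      Nat.card (cycleGraph n ≃g cycleGraph n) = p.descFactorial n * (p.choose 2 - n.choose 2).choose (5 - n) := by
  classical
  have e : (Σ G : {G : SimpleGraph (Fin p) // G.edgeSet.ncard = 5 ∧ Nonempty (cycleGraph n ↪g G)}, (cycleGraph n ↪g G.1)) ≃
     (Σ f : Fin n ↪ Fin p, {G : SimpleGraph (Fin p) // G.edgeSet.ncard = 5 ∧ G.comap f = cycleGraph n}) :=
    { toFun := fun x => ⟨x.2.toEmbedding, x.1.1, x.1.2.1, by ext a b; exact x.2.map_adj_iff⟩
      invFun := fun y => ⟨⟨y.2.1, y.2.2.1, ⟨⟨y.1, fun {a b} => (iff_of_eq (congrArg (fun K : SimpleGraph (Fin n) => K.Adj a b) y.2.2.2))⟩⟩⟩, ⟨y.1, fun {a b} => (iff_of_eq (congrArg (fun K : SimpleGraph (Fin n) => K.Adj a b) y.2.2.2))⟩⟩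
      left_inv := fun x => rfl
      right_inv := fun x => rfl }
  have h := Nat.card_congr e
  have hf : ∀ f : Fin n ↪ Fin p, Finite {G : SimpleGraph (Fin p) // G.edgeSet.ncard = 5 ∧ G.comap f = cycleGraph n} := fun f => inferInstance
  have hg : ∀ G : SimpleGraph (Fin p), Finite (cycleGraph n ↪g G) := fun G => Finite.of_injective (fun f => (f : Fin n → Fin p)) DFunLike.coe_injective
  rw [Nat.card_sigma, Nat.card_sigma] at h
  rw [Finset.sum_congr rfl (fun G _ => emb_card G.2.1 hn G.2.2.some), 
    Finset.sum_congr rfl (fun f _ => ext_card f (cycleGraph n) (by rw [cyc_edges n (by omega)]; exact hn5)), Finset.sum_const, Finset.sum_const, cyc_edges n (by omega)] at h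
  simp only [Finset.card_univ, smul_eq_mul, Fintype.card_embedding_eq, Fintype.card_fin] at h
  rwa [Nat.card_eq_fintype_card]

theorem F_p_five (p : ℕ) (hp : 5 ≤ p) (r : ℕ) (hr : r = p * (p - 1) / 2) :
    Fcount p 5 = 12 * Nat.choose p 5 + 3 * Nat.choose p 4 * (r - 6) := by
  classical
  have h4 := count_n (n := 4) (p := p) le_rfl (by norm_num)
  have h5 := count_n (n := 5) (p := p) (by norm_num) le_rfl
  rw [aut4, Nat.descFactorial_eq_factorial_mul_choose, Nat.choose_two_right, ← hr] at h4
  rw [aut5, Nat.descFactorial_eq_factorial_mul_choose] at h5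
  have hsum : Fcount p 5 = Nat.card {G : SimpleGraph (Fin p) // G.edgeSet.ncard = 5 ∧ Nonempty (cycleGraph 4 ↪g G)}
      + Nat.card {G : SimpleGraph (Fin p) // G.edgeSet.ncard = 5 ∧ Nonempty (cycleGraph 5 ↪g G)} := by
    unfold Fcount
    simp only [Nat.card_eq_fintype_card, Fintype.card_subtype]
    rw [← Finset.card_union_of_disjoint]
    · congr 1
      ext G
      simp only [Finset.mem_filter, Finset.mem_univ, true_and, Finset.mem_union, IsChordal, not_forall, not_isEmpty_iff, exists_prop]
      constructor
      · rintro ⟨hG, n, hn, ⟨f⟩⟩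
        obtain ⟨h1, h2⟩ := img_edges f (by omega)
        have h3 := Set.ncard_le_ncard h2 (Set.toFinite _)
        rw [h1, hG] at h3
        obtain rfl | rfl : n = 4 ∨ n = 5 := by omega
        · exact Or.inl ⟨hG, ⟨f⟩⟩
        · exact Or.inr ⟨hG, ⟨f⟩⟩
      · rintro (⟨hG, h⟩ | ⟨hG, h⟩)
        · exact ⟨hG, 4, le_rfl, h⟩
        · exact ⟨hG, 5, by norm_num, h⟩
    · rw [Finset.disjoint_left]
      intro G h1 h2
      simp only [Finset.mem_filter, Finset.mem_univ, true_and] at h1 h2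
      obtain ⟨hG, ⟨f⟩⟩ := h1
      obtain ⟨_, ⟨g⟩⟩ := h2
      have h := Set.ncard_le_ncard (range_sub hG le_rfl (by norm_num) f g) (Set.toFinite _)
      rw [← Set.image_univ, ← Set.image_univ, Set.ncard_image_of_injective _ g.injective, Set.ncard_image_of_injective _ f.injective] at h
      simp [Set.ncard_univ] at h
  rw [hsum]
  have e4 : Nat.choose 4 2 = 6 := rfl
  have f4 : Nat.factorial 4 = 24 := rfl
  have f5 : Nat.factorial 5 = 120 := rfl
  rw [e4, f4] at h4
  rw [f5] at h5
  simp only [show 5 - 4 = 1 from rfl, Nat.choose_one_right, Nat.sub_self, Nat.choose_zero_right] at h4 h5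
  have : 24 * p.choose 4 * (r - 6) = 8 * (3 * p.choose 4 * (r - 6)) := by ring
  omega
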